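/- arXiv:1502.06393 — 7 statements merged into one kernel-verified Lean document; each statement's English description precedes it below -/
import Mathlib

section
/- (Fine's theorem, finite form.) Let 𝒜, ℬ, 𝒳, 𝒴 and Λ be finite sets, let q be a probability distribution on Λ, and for each λ ∈ Λ let p_A(·|x,λ) and p_B(·|y,λ) be probability distributions on 𝒜 and ℬ for every x ∈ 𝒳, y ∈ 𝒴. Then there exists a probability distribution μ on the finite set of pairs of functions (f : 𝒳 → 𝒜, g : 𝒴 → ℬ) such that for all a, b, x, y: Σ_{λ∈Λ} q(λ)·p_A(a|x,λ)·p_B(b|y,λ) = Σ_{(f,g) : f(x)=a, g(y)=b} μ(f,g). That is, every local hidden variable behavior is a convex combination of local deterministic behaviors. -/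
/-!
For each hidden value `l`, let the two parties draw the outcomes for all of their settings
independently: a function `f : X → A` receives the weight `∏ x, pA (f x) x l`, and likewise for
`g : Y → B`. By distributivity these product weights are probability distributions, and the
marginal at a single setting `x` is `pA · x l`, since every other factor sums to one
(`sum_ite_prod_eq`). Averaging the product of both weights against `q` gives `μ`.
-/

theorem sum_prod_eq_one {A X : Type*} [Fintype A] [Fintype X] [DecidableEq X]
    (p : A → X → ℝ) (hp : ∀ x, ∑ a, p a x = 1) :
    ∑ f : X → A, ∏ x, p (f x) x = 1 := by
  rw [← Fintype.prod_sum (fun x a => p a x)]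
  simp [hp]

/-- The marginal at the coordinate `x` of the product distribution with factors `p · x'`. -/
theorem sum_ite_prod_eq {A X : Type*} [Fintype A] [Fintype X] [DecidableEq A] [DecidableEq X]
    (p : A → X → ℝ) (hp : ∀ x, ∑ a, p a x = 1) (a : A) (x : X) :
    ∑ f : X → A, (if f x = a then ∏ x', p (f x') x' else 0) = p a x := by
  -- The constraint `f x = a` is absorbed into the factor at `x`, so that distributivity applies.
  have h : ∀ f : X → A, (if f x = a then ∏ x', p (f x') x' else 0) =
      ∏ x', if x' = x then (if f x' = a then p (f x') x' else 0) else p (f x') x' := by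
    intro f
    split_ifs with hf
    · refine Finset.prod_congr rfl fun x' _ => ?_
      split_ifs with h1 h2
      · rfl
      · exact absurd (h1 ▸ hf) h2
      · rfl
    · exact (Finset.prod_eq_zero (Finset.mem_univ x) (by simp [hf])).symm
  rw [Finset.sum_congr rfl fun f _ => h f,
    ← Fintype.prod_sum (fun x' a' => if x' = x then (if a' = a then p a' x' else 0) else p a' x'),
    Fintype.prod_eq_single x]
  · simp
  · intro x' hx'
    simp [hx', hp]

/-- Fine's theorem (finite form): every local hidden variable behavior is a convex
combination of local deterministic behaviors. -/
theorem stmt_7 {A B X Y Λ : Type*}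
    [Fintype A] [Fintype B] [Fintype X] [Fintype Y] [Fintype Λ]
    [DecidableEq A] [DecidableEq B] [DecidableEq X] [DecidableEq Y]
    (q : Λ → ℝ) (hq0 : ∀ l, 0 ≤ q l) (hq1 : ∑ l, q l = 1)
    (pA : A → X → Λ → ℝ) (pB : B → Y → Λ → ℝ)
    (hpA0 : ∀ a x l, 0 ≤ pA a x l) (hpA1 : ∀ x l, ∑ a, pA a x l = 1)
    (hpB0 : ∀ b y l, 0 ≤ pB b y l) (hpB1 : ∀ y l, ∑ b, pB b y l = 1) :
    ∃ μ : (X → A) × (Y → B) → ℝ,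
      (∀ fg, 0 ≤ μ fg) ∧ (∑ fg, μ fg = 1) ∧
      ∀ (a : A) (b : B) (x : X) (y : Y),
        ∑ l, q l * pA a x l * pB b y l =
          ∑ fg : (X → A) × (Y → B),
            (if fg.1 x = a ∧ fg.2 y = b then μ fg else 0) := by
  refine ⟨fun fg => ∑ l, q l * ((∏ x, pA (fg.1 x) x l) * ∏ y, pB (fg.2 y) y l), ?_, ?_, ?_⟩
  · intro fg
    exact Finset.sum_nonneg fun l _ => mul_nonneg (hq0 l) (mul_nonneg
      (Finset.prod_nonneg fun x _ => hpA0 _ _ _) (Finset.prod_nonneg fun y _ => hpB0 _ _ _))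
  · rw [Finset.sum_comm, ← hq1]
    refine Finset.sum_congr rfl fun l _ => ?_
    rw [← Finset.mul_sum, Fintype.sum_prod_type]
    dsimp only
    rw [← Fintype.sum_mul_sum,
      sum_prod_eq_one (fun a x => pA a x l) (fun x => hpA1 x l),
      sum_prod_eq_one (fun b y => pB b y l) (fun y => hpB1 y l)]
    ring
  · intro a b x y
    have h : ∀ fg : (X → A) × (Y → B),
        (if fg.1 x = a ∧ fg.2 y = b then
          ∑ l, q l * ((∏ x, pA (fg.1 x) x l) * ∏ y, pB (fg.2 y) y l) else 0) =
        ∑ l, q l * ((if fg.1 x = a then ∏ x, pA (fg.1 x) x l else 0) *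
          (if fg.2 y = b then ∏ y, pB (fg.2 y) y l else 0)) := by
      intro fg
      by_cases h1 : fg.1 x = a <;> by_cases h2 : fg.2 y = b <;> simp [h1, h2]
    rw [Finset.sum_congr rfl fun fg _ => h fg, Finset.sum_comm]
    refine Finset.sum_congr rfl fun l _ => ?_
    have hA := sum_ite_prod_eq (fun a x => pA a x l) (fun x => hpA1 x l) a x
    have hB := sum_ite_prod_eq (fun b y => pB b y l) (fun y => hpB1 y l) b y
    rw [mul_assoc, ← hA, ← hB, Fintype.sum_mul_sum, ← Finset.mul_sum, Fintype.sum_prod_type]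
end

section
/- (CHSH inequality for local behaviors.) Let μ be any probability distribution over pairs of functions (f, g) with f, g : {0,1} → {−1,1}, and define the behavior p(a,b|x,y) = Σ_{(f,g) : f(x)=a, g(y)=b} μ(f,g) for a, b ∈ {−1,1} and x, y ∈ {0,1}. With correlators ⟨a_x b_y⟩ = Σ_{a,b} a·b·p(a,b|x,y), the CHSH value satisfies ⟨a₀b₀⟩ + ⟨a₀b₁⟩ + ⟨a₁b₀⟩ − ⟨a₁b₁⟩ ≤ 2. -/
/-!
The CHSH expression is linear in the behavior, so its value on a local behavior is the `μ`-average
of its values on deterministic strategies, and each of those is at most `2`.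
-/

/-- CHSH inequality for local behaviors: for any distribution `μ` over deterministic
strategies (pairs of functions `{0,1} → {−1,1}`, encoded here by `Bool → Bool` with
the value map `v`), the CHSH combination of correlators is at most `2`.
Inputs `x, y ∈ {0,1}` are encoded by `Bool` (`false = 0`, `true = 1`). -/
theorem stmt_8
    (μ : ((Bool → Bool) × (Bool → Bool)) → ℝ)
    (hμ0 : ∀ fg, 0 ≤ μ fg) (hμ1 : ∑ fg, μ fg = 1)
    (v : Bool → ℤ) (hv : v = fun b => if b then 1 else -1)
    (p : ℤ → ℤ → Bool → Bool → ℝ)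
    (hp : ∀ a b x y, p a b x y =
      ∑ fg : (Bool → Bool) × (Bool → Bool),
        (if v (fg.1 x) = a ∧ v (fg.2 y) = b then μ fg else 0))
    (E : Bool → Bool → ℝ)
    (hE : ∀ x y, E x y = ∑ a ∈ ({-1, 1} : Finset ℤ), ∑ b ∈ ({-1, 1} : Finset ℤ),
      ((a * b : ℤ) : ℝ) * p a b x y) :
    E false false + E false true + E true false - E true true ≤ 2 := by
  -- Exchanging sums, each correlator is the `μ`-average of the product of the outputs.
  have key : ∀ x y, E x y = ∑ fg : (Bool → Bool) × (Bool → Bool),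
      ((v (fg.1 x) : ℝ) * v (fg.2 y)) * μ fg := by
    intro x y
    rw [hE]
    simp only [hp, Finset.mul_sum]
    rw [Finset.sum_pair (by norm_num), Finset.sum_pair (by norm_num),
      Finset.sum_pair (by norm_num), ← Finset.sum_add_distrib, ← Finset.sum_add_distrib,
      ← Finset.sum_add_distrib]
    refine Finset.sum_congr rfl fun fg _ => ?_
    subst hv
    cases fg.1 x <;> cases fg.2 y <;> norm_num
  simp only [key]
  rw [← Finset.sum_add_distrib, ← Finset.sum_add_distrib, ← Finset.sum_sub_distrib]
  -- A deterministic strategy has CHSH value `a₀ (b₀ + b₁) + a₁ (b₀ - b₁) ≤ 2`, as one of the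
  -- two brackets vanishes and the other is `±2`.
  calc _ ≤ ∑ fg, 2 * μ fg := by
        refine Finset.sum_le_sum fun fg _ => ?_
        have h := hμ0 fg
        subst hv
        cases fg.1 false <;> cases fg.1 true <;> cases fg.2 false <;> cases fg.2 true <;>
          norm_num <;> linarith
    _ = 2 := by rw [← Finset.mul_sum, hμ1, mul_one]
end

section
/- (GHZ inequality for local strategies.) There do not exist functions f, g, h : {0,1} → {0,1} satisfying simultaneously f(1)⊕g(1)⊕h(1) = 1, f(1)⊕g(0)⊕h(0) = 0, f(0)⊕g(1)⊕h(0) = 0 and f(0)⊕g(0)⊕h(1) = 0. Consequently, for every probability distribution μ over triples of functions (f,g,h), the GHZ value v_u = (1/4)·Σ over the four inputs (x,y,z) ∈ {(1,1,1),(1,0,0),(0,1,0),(0,0,1)} of the probability (under μ) that f(x)⊕g(y)⊕h(z) = x∧y∧z, satisfies v_u ≤ 3/4. -/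
/-!
The xor of the four winning conditions is contradictory: each of the six bits `f x`, `g y`, `h z`
occurs exactly twice on the left, so the left sides xor to `0`, while the right sides xor to `1`.
Hence each deterministic strategy wins on at most three of the four inputs. Exchanging the sum
over inputs with the sum over strategies, the total winning probability is at most `3 * ∑ s, μ s`.
-/

/-- No deterministic strategy satisfies all four winning conditions, because of parity. -/
theorem ghz_no_perfect (f g h : Bool → Bool) :
    ¬ (Bool.xor (f true) (Bool.xor (g true) (h true)) = true ∧
        Bool.xor (f true) (Bool.xor (g false) (h false)) = false ∧
        Bool.xor (f false) (Bool.xor (g true) (h false)) = false ∧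
        Bool.xor (f false) (Bool.xor (g false) (h true)) = false) := by
  generalize f true = f1, f false = f0, g true = g1, g false = g0, h true = h1, h false = h0
  revert f1 f0 g1 g0 h1 h0
  decide

/-- GHZ inequality for local strategies: no deterministic triple of functions wins
the GHZ game on all four inputs, and consequently every local (classical) strategy,
i.e. every distribution `μ` over triples of functions, has GHZ value `v_u ≤ 3/4`.
Bits are encoded by `Bool` (`false = 0`, `true = 1`). -/
theorem stmt_10 :
    (¬ ∃ f g h : Bool → Bool,
        Bool.xor (f true) (Bool.xor (g true) (h true)) = true ∧
        Bool.xor (f true) (Bool.xor (g false) (h false)) = false ∧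
        Bool.xor (f false) (Bool.xor (g true) (h false)) = false ∧
        Bool.xor (f false) (Bool.xor (g false) (h true)) = false) ∧
    (∀ μ : ((Bool → Bool) × (Bool → Bool) × (Bool → Bool)) → ℝ,
      (∀ s, 0 ≤ μ s) → (∑ s, μ s = 1) →
      (1/4 : ℝ) * ∑ xyz ∈ ({(true, true, true), (true, false, false),
          (false, true, false), (false, false, true)} : Finset (Bool × Bool × Bool)),
        (∑ s : (Bool → Bool) × (Bool → Bool) × (Bool → Bool),
          if Bool.xor (s.1 xyz.1) (Bool.xor (s.2.1 xyz.2.1) (s.2.2 xyz.2.2))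
              = (xyz.1 && xyz.2.1 && xyz.2.2)
          then μ s else 0) ≤ 3/4) := by
  refine ⟨fun ⟨f, g, h, H⟩ => ghz_no_perfect f g h H, fun μ hμ hsum => ?_⟩
  rw [Finset.sum_comm]
  -- A strategy `s` contributes `μ s` once for each input it wins on, that is, at most three times.
  have key := Finset.sum_le_sum (s := Finset.univ) (g := fun s => 3 * μ s)
    (f := fun s : (Bool → Bool) × (Bool → Bool) × (Bool → Bool) =>
      ∑ xyz ∈ ({(true, true, true), (true, false, false),
          (false, true, false), (false, false, true)} : Finset (Bool × Bool × Bool)),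
        if Bool.xor (s.1 xyz.1) (Bool.xor (s.2.1 xyz.2.1) (s.2.2 xyz.2.2))
              = (xyz.1 && xyz.2.1 && xyz.2.2)
          then μ s else 0) (by
      rintro ⟨f, g, h⟩ -
      have h0 := hμ (f, g, h)
      have hn := ghz_no_perfect f g h
      rw [Finset.sum_insert (by decide), Finset.sum_insert (by decide),
        Finset.sum_insert (by decide), Finset.sum_singleton]
      simp only [Bool.and_true, Bool.and_false]
      split_ifs <;> first | linarith | exact absurd ⟨‹_›, ‹_›, ‹_›, ‹_›⟩ hn)
  rw [← Finset.mul_sum, hsum] at key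
  linarith
end

section
/- There exist constants C, c > 0 such that for every n ≥ 2 there is a family 𝓗 of functions h : {0,1}^n → {0,1,2,3} with |𝓗| ≤ C·n^c (polynomial in n) having the property that for every 4 pairwise distinct strings r₀, r₁, r₂, r₃ ∈ {0,1}^n and every 4-tuple of values (z₀, z₁, z₂, z₃) ∈ {0,1,2,3}⁴ there exists h ∈ 𝓗 with h(r₀) = z₀, h(r₁) = z₁, h(r₂) = z₂ and h(r₃) = z₃. In particular, for every quadruple of distinct strings some function in 𝓗 maps them to four pairwise distinct values. -/
/-!
Each pair of distinct strings differs in some coordinate, so the coordinates indexed by the pairs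
from a quadruple already separate its members. The family therefore consists of all functions
`x ↦ g (x restricted to s)`, where `s` picks 16 coordinates (one for each ordered pair of indices,
repetitions allowed) and `g : {0,1}^16 → {0,1,2,3}` is arbitrary. There are `n ^ 16` choices of `s`
and a number of choices of `g` that does not depend on `n`.
-/

/-- Finitely many distinct strings stay distinct after projecting to suitable coordinates, one for
each ordered pair of indices. -/
lemma exists_separating_coords {ι : Type*} {n : ℕ} (hn : 0 < n)
    (r : ι → (Fin n → Bool)) (hr : Function.Injective r) :
    ∃ s : ι × ι → Fin n, Function.Injective (fun i => fun p => r i (s p)) := by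
  have key : ∀ p : ι × ι, ∃ k : Fin n, p.1 ≠ p.2 → r p.1 k ≠ r p.2 k := by
    intro p
    by_cases h : p.1 = p.2
    -- On the diagonal any coordinate will do; this is where `0 < n` is needed.
    · exact ⟨⟨0, hn⟩, fun h' => absurd h h'⟩
    · obtain ⟨k, hk⟩ := Function.ne_iff.mp (fun e => h (hr e))
      exact ⟨k, fun _ => hk⟩
  choose s hs using key
  refine ⟨s, fun i j hij => ?_⟩
  by_contra hne
  exact hs (i, j) hne (congrFun hij (i, j))

/-- The bound is stated for arbitrary finite index and value types, so that the number of
functions `g`, which is the constant factor, is never evaluated. -/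
lemma exists_small_family (ι α : Type) [Fintype ι] [DecidableEq ι] [Fintype α] [DecidableEq α]
    [Nonempty α] (n : ℕ) (hn : 0 < n) :
    ∃ H : Finset ((Fin n → Bool) → α),
      H.card ≤ Fintype.card ((ι × ι → Bool) → α) * n ^ Fintype.card (ι × ι) ∧
      ∀ r : ι → (Fin n → Bool), Function.Injective r →
        ∀ z : ι → α, ∃ h ∈ H, ∀ j : ι, h (r j) = z j := by
  refine ⟨Finset.univ.image
    (fun q : ((ι × ι → Bool) → α) × (ι × ι → Fin n) => fun x => q.1 (fun p => x (q.2 p))), ?_, ?_⟩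
  · refine Finset.card_image_le.trans (le_of_eq ?_)
    rw [Finset.card_univ, Fintype.card_prod, Fintype.card_fun (α := ι × ι) (β := Fin n),
      Fintype.card_fin]
  · intro r hr z
    obtain ⟨s, hs⟩ := exists_separating_coords hn r hr
    let g : (ι × ι → Bool) → α :=
      Function.extend (fun i => fun p => r i (s p)) z (fun _ => Classical.arbitrary α)
    exact ⟨_, Finset.mem_image_of_mem _ (Finset.mem_univ (g, s)), fun j => 
      hs.extend_apply z (fun _ => Classical.arbitrary α) j⟩

/-- There is a polynomial-size (in `n`) family `𝓗` of hash functions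
`h : {0,1}^n → {0,1,2,3}` realizing every value pattern on every 4 distinct
points; in particular, every quadruple of distinct strings is mapped to four
pairwise distinct values by some member of the family. -/
theorem stmt_14 :
    ∃ C c : ℝ, 0 < C ∧ 0 < c ∧
      ∀ n : ℕ, 2 ≤ n →
        ∃ H : Finset ((Fin n → Bool) → Fin 4),
          (H.card : ℝ) ≤ C * (n : ℝ) ^ c ∧
          ∀ r : Fin 4 → (Fin n → Bool), Function.Injective r →
            ∀ z : Fin 4 → Fin 4, ∃ h ∈ H, ∀ j : Fin 4, h (r j) = z j := by
  refine ⟨(Fintype.card ((Fin 4 × Fin 4 → Bool) → Fin 4) : ℝ),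
    (Fintype.card (Fin 4 × Fin 4) : ℝ), Nat.cast_pos.mpr Fintype.card_pos,
    Nat.cast_pos.mpr Fintype.card_pos, fun n hn => ?_⟩
  obtain ⟨H, hcard, hH⟩ := exists_small_family (Fin 4) (Fin 4) n (by omega)
  refine ⟨H, ?_, hH⟩
  rw [Real.rpow_natCast]
  exact_mod_cast hcard
end

section
/- Let k ≤ n be natural numbers and let p be a probability distribution on {0,1}^n with min-entropy at least k, i.e. p(x) ≤ 2^{−k} for all x. Then p is a finite convex combination of flat distributions with min-entropy k: there exist finitely many subsets S₁,…,S_N ⊆ {0,1}^n each of size 2^k and weights w₁,…,w_N ≥ 0 with Σ w_i = 1 such that p = Σ_i w_i·U_{S_i}, where U_{S} denotes the uniform distribution on S. -/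
/-!
Rescaling by `2 ^ k`, the claim says that a vector `q` with entries in `[0, 1]` and integer sum `m`
is a convex combination of indicators of `m`-element sets (the hypersimplex is the convex hull of
its integer points).

This is proved by strong induction on the number of fractional entries of `q`. With none, `q` is
itself such an indicator. Otherwise, since the sum is an integer, there are at least two fractional
entries `a ≠ b` (`exists_two_fractional`). Moving mass from `b` to `a`, or from `a` to `b`, until one
of the two entries becomes integral gives two vectors with fewer fractional entries
(`exists_shift`), and `q` lies on the segment between them.
-/

namespace FlatDecomposition

variable {α : Type*} [Fintype α]

/-- The coordinates at which `q` takes neither of the values `0`, `1`. -/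
noncomputable def fractional (q : α → ℝ) : Finset α :=
  Finset.univ.filter fun x => ¬(q x = 0 ∨ q x = 1)

lemma exists_two_fractional {q : α → ℝ} {m : ℕ} (h0 : ∀ x, 0 ≤ q x) (h1 : ∀ x, q x ≤ 1)
    (hs : ∑ x, q x = m) {a : α} (ha : a ∈ fractional q) : ∃ b ∈ fractional q, b ≠ a := by
  classical
  by_contra! hb
  have key : ∀ x ∈ Finset.univ.erase a, q x = (((if q x = 1 then 1 else 0 : ℤ)) : ℝ) := by
    intro x hx
    have hx' : x ∉ fractional q := fun h => (Finset.mem_erase.1 hx).1 (hb x h)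
    simp only [fractional, Finset.mem_filter, Finset.mem_univ, true_and, not_not] at hx'
    rcases hx' with h | h <;> simp [h]
  rw [← Finset.add_sum_erase _ _ (Finset.mem_univ a), Finset.sum_congr rfl key,
    ← Int.cast_sum] at hs
  generalize (∑ x ∈ Finset.univ.erase a, (if q x = 1 then 1 else 0 : ℤ)) = z at hs
  simp only [fractional, Finset.mem_filter, Finset.mem_univ, true_and, not_or] at ha
  have hlo : 0 < q a := lt_of_le_of_ne (h0 a) (Ne.symm ha.1)
  have hhi : q a < 1 := lt_of_le_of_ne (h1 a) ha.2
  have hq : q a = ((m - z : ℤ) : ℝ) := by push_cast; linarith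
  rw [hq] at hlo hhi
  have hlo' : (0 : ℤ) < m - z := by exact_mod_cast hlo
  have hhi' : (m - z : ℤ) < 1 := by exact_mod_cast hhi
  omega

variable [DecidableEq α]

/-- The vector `q + t (e_a - e_b)`. -/
def shift (q : α → ℝ) (a b : α) (t : ℝ) : α → ℝ :=
  fun x => q x + t * ((if x = a then 1 else 0) - (if x = b then 1 else 0))

/-- The 0/1-indicator vectors of the subsets of `α` of size `m`. -/
def indicators (α : Type*) [DecidableEq α] (m : ℕ) : Set (α → ℝ) :=
  {v | ∃ S : Finset α, S.card = m ∧ v = fun x => if x ∈ S then 1 else 0}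

/-- Mass can be moved from `b` to `a` until `q a` reaches `1` or `q b` reaches `0`. -/
lemma exists_shift {q : α → ℝ} {m : ℕ} (h0 : ∀ x, 0 ≤ q x) (h1 : ∀ x, q x ≤ 1)
    (hs : ∑ x, q x = m) {a b : α} (ha : a ∈ fractional q) (hb : b ∈ fractional q) (hab : a ≠ b) :
    ∃ t > 0, (∀ x, 0 ≤ shift q a b t x) ∧ (∀ x, shift q a b t x ≤ 1) ∧
      ∑ x, shift q a b t x = m ∧ (fractional (shift q a b t)).card < (fractional q).card := by
  have ha' := ha
  have hb' := hb
  simp only [fractional, Finset.mem_filter, Finset.mem_univ, true_and, not_or] at ha' hb'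
  have ha1 : q a < 1 := lt_of_le_of_ne (h1 a) ha'.2
  have hb0 : 0 < q b := lt_of_le_of_ne (h0 b) (Ne.symm hb'.1)
  have sa (t : ℝ) : shift q a b t a = q a + t := by simp [shift, hab]
  have sb (t : ℝ) : shift q a b t b = q b - t := by simp [shift, hab.symm, sub_eq_add_neg]
  have so (t : ℝ) {x : α} (hxa : x ≠ a) (hxb : x ≠ b) : shift q a b t x = q x := by
    simp [shift, hxa, hxb]
  have hmin : min (1 - q a) (q b) = 1 - q a ∨ min (1 - q a) (q b) = q b := min_choice _ _
  have hle1 := min_le_left (1 - q a) (q b)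
  have hle2 := min_le_right (1 - q a) (q b)
  have hpos : 0 < min (1 - q a) (q b) := lt_min (by linarith) hb0
  generalize min (1 - q a) (q b) = t at *
  refine ⟨t, hpos, fun x => ?_, fun x => ?_, ?_, ?_⟩
  · by_cases hxa : x = a
    · subst hxa; rw [sa]; linarith [h0 x]
    by_cases hxb : x = b
    · subst hxb; rw [sb]; linarith
    rw [so t hxa hxb]; exact h0 x
  · by_cases hxa : x = a
    · subst hxa; rw [sa]; linarith
    by_cases hxb : x = b
    · subst hxb; rw [sb]; linarith [h1 x]
    rw [so t hxa hxb]; exact h1 x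
  · simp [shift, Finset.sum_add_distrib, ← Finset.mul_sum, hs]
  · refine Finset.card_lt_card ((Finset.ssubset_iff_of_subset fun x hx => ?_).2 ?_)
    · by_cases hxa : x = a
      · rwa [hxa]
      by_cases hxb : x = b
      · rwa [hxb]
      simpa [fractional, so t hxa hxb] using hx
    · rcases hmin with h | h
      · exact ⟨a, ha, by simp [fractional, sa, h]⟩
      · exact ⟨b, hb, by simp [fractional, sb, h]⟩

theorem mem_convexHull_indicators (m : ℕ) (q : α → ℝ) (h0 : ∀ x, 0 ≤ q x) (h1 : ∀ x, q x ≤ 1)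
    (hs : ∑ x, q x = m) : q ∈ convexHull ℝ (indicators α m) := by
  induction hc : (fractional q).card using Nat.strong_induction_on generalizing q with
  | _ c ih =>
  subst hc
  rcases (fractional q).eq_empty_or_nonempty with he | ⟨a, ha⟩
  · have key : ∀ x, q x = if x ∈ Finset.univ.filter (fun y => q y = 1) then 1 else 0 := by
      intro x
      have hx : x ∉ fractional q := by simp [he]
      simp only [fractional, Finset.mem_filter, Finset.mem_univ, true_and, not_not] at hx
      rcases hx with h | h <;> simp [h]
    refine subset_convexHull ℝ _ ⟨Finset.univ.filter (fun y => q y = 1), ?_, funext key⟩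
    rw [Finset.sum_congr rfl fun x _ => key x, Finset.sum_ite_mem, Finset.univ_inter,
      Finset.sum_const, nsmul_eq_mul, mul_one] at hs
    exact_mod_cast hs
  · obtain ⟨b, hb, hba⟩ := exists_two_fractional h0 h1 hs ha
    obtain ⟨t, ht, ht0, ht1, hts, htc⟩ := exists_shift h0 h1 hs ha hb hba.symm
    obtain ⟨s, hs', hs0, hs1, hss, hsc⟩ := exists_shift h0 h1 hs hb ha hba
    have hconv := (convex_convexHull ℝ (indicators α m)) (ih _ htc _ ht0 ht1 hts rfl)
      (ih _ hsc _ hs0 hs1 hss rfl) (a := s / (s + t)) (b := t / (s + t))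
      (by positivity) (by positivity) (by field_simp)
    convert hconv using 1
    funext x
    simp only [shift, Pi.add_apply, Pi.smul_apply, smul_eq_mul]
    field_simp
    ring

end FlatDecomposition

/-- Every distribution on `{0,1}^n` with min-entropy at least `k` (all point masses
`≤ 2^{-k}`) is a finite convex combination of flat distributions with min-entropy
`k`, i.e. uniform distributions on subsets of size `2^k`. -/
theorem stmt_15 (n k : ℕ) (hk : k ≤ n) (p : (Fin n → Bool) → ℝ)
    (hp0 : ∀ x, 0 ≤ p x) (hp1 : ∑ x, p x = 1)
    (hme : ∀ x, p x ≤ ((2 : ℝ) ^ k)⁻¹) :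
    ∃ (N : ℕ) (S : Fin N → Finset (Fin n → Bool)) (w : Fin N → ℝ),
      (∀ i, (S i).card = 2 ^ k) ∧
      (∀ i, 0 ≤ w i) ∧ (∑ i, w i = 1) ∧
      ∀ x, p x = ∑ i, w i * (if x ∈ S i then ((2 : ℝ) ^ k)⁻¹ else 0) := by
  have hpos : (0 : ℝ) < 2 ^ k := by positivity
  have hmem := FlatDecomposition.mem_convexHull_indicators (2 ^ k) (fun x => 2 ^ k * p x)
    (fun x => mul_nonneg hpos.le (hp0 x))
    (fun x => by
      have := mul_le_mul_of_nonneg_left (hme x) hpos.le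
      rwa [mul_inv_cancel₀ hpos.ne'] at this)
    (by rw [← Finset.mul_sum, hp1]; simp)
  obtain ⟨ι, _, w, z, hw0, hw1, hz, hsum⟩ := mem_convexHull_iff_exists_fintype.1 hmem
  choose S hS hzS using hz
  let e := (Fintype.equivFin ι).symm
  refine ⟨Fintype.card ι, fun i => S (e i), fun i => w (e i), fun i => hS _, fun i => hw0 _,
    (e.sum_comp w).trans hw1, fun x => ?_⟩
  rw [e.sum_comp fun i => w i * (if x ∈ S i then ((2 : ℝ) ^ k)⁻¹ else 0)]
  have hx := congrFun hsum x
  simp only [Finset.sum_apply, Pi.smul_apply, smul_eq_mul, hzS] at hx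
  rw [← inv_mul_cancel_left₀ hpos.ne' (p x), ← hx, Finset.mul_sum]
  refine Finset.sum_congr rfl fun i _ => ?_
  split_ifs <;> ring
end

section
/- (Local bound for the 4-party Bell inequality used in the eight-device amplification protocol.) Let X₀ = {0111, 1011, 1101, 1110} and X₁ = {0001, 0010, 0100, 1000} ⊆ {0,1}⁴. Then for every quadruple of functions f₁, f₂, f₃, f₄ : {0,1} → {0,1}, the number of inputs x = (x₁,x₂,x₃,x₄) ∈ X₀ with f₁(x₁)⊕f₂(x₂)⊕f₃(x₃)⊕f₄(x₄) = 1 plus the number of inputs x ∈ X₁ with f₁(x₁)⊕f₂(x₂)⊕f₃(x₃)⊕f₄(x₄) = 0 is at least 2. Consequently every local behavior p(a⃗|x⃗) (a convex combination of such deterministic strategies) satisfies Σ_{a⃗,x⃗} c_{a⃗,x⃗}·p(a⃗|x⃗) ≥ 2, where c_{a⃗,x⃗} = (a₁⊕a₂⊕a₃⊕a₄) for x⃗ ∈ X₀ and (a₁⊕a₂⊕a₃⊕a₄⊕1) for x⃗ ∈ X₁. -/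
/-!
For a deterministic strategy put `d i = f i 0 ⊕ f i 1` and let `k` be the number of `i` with
`d i = 1`. With `s` the parity of the outputs on input `1111` and `t` the one on `0000`, the
output parities are `s ⊕ d i` on `X₀` and `t ⊕ d i` on `X₁`, where `s ⊕ t` is the parity of `k`.
For even `k` the Bell value is therefore `k + (4 - k) = 4`; for odd `k` it is `2k` or `2(4 - k)`,
hence at least `2`. `two_le_bits` is this finite claim about the eight bits `f i b`.

The bound for local behaviors follows by linearity: after exchanging sums the Bell expression is
the `μ`-average of the deterministic Bell values (`bell_eq_average`).
-/

/-- The deterministic bound in terms of the eight output bits, where `p` and `q` denote the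
outputs on inputs `0` and `1`. -/
lemma two_le_bits : ∀ p₀ q₀ p₁ q₁ p₂ q₂ p₃ q₃ : Bool,
    2 ≤ ((Bool.xor p₀ (Bool.xor q₁ (Bool.xor q₂ q₃))).toNat
        + ((Bool.xor q₀ (Bool.xor p₁ (Bool.xor q₂ q₃))).toNat
        + ((Bool.xor q₀ (Bool.xor q₁ (Bool.xor p₂ q₃))).toNat
        + (Bool.xor q₀ (Bool.xor q₁ (Bool.xor q₂ p₃))).toNat)))
      + ((!Bool.xor p₀ (Bool.xor p₁ (Bool.xor p₂ q₃))).toNat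
        + ((!Bool.xor p₀ (Bool.xor p₁ (Bool.xor q₂ p₃))).toNat
        + ((!Bool.xor p₀ (Bool.xor q₁ (Bool.xor p₂ p₃))).toNat
        + (!Bool.xor q₀ (Bool.xor p₁ (Bool.xor p₂ p₃))).toNat))) := by
  decide

/-- A linear functional `c` of the behavior induced by the weights `μ` is the `μ`-weighted sum of
its values on deterministic strategies. -/
lemma bell_eq_average (X : Finset (Fin 4 → Bool)) (c : (Fin 4 → Bool) → (Fin 4 → Bool) → ℝ)
    (μ : (Fin 4 → (Bool → Bool)) → ℝ) :
    ∑ x ∈ X, ∑ a : Fin 4 → Bool, c x a *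
        (∑ f : Fin 4 → (Bool → Bool), if (∀ i : Fin 4, f i (x i) = a i) then μ f else 0)
      = ∑ f : Fin 4 → (Bool → Bool), μ f * ∑ x ∈ X, c x (fun i => f i (x i)) := by
  simp_rw [Finset.mul_sum]
  rw [Finset.sum_comm (s := Finset.univ) (t := X)]
  refine Finset.sum_congr rfl fun x _ => ?_
  rw [Finset.sum_comm]
  refine Finset.sum_congr rfl fun f _ => ?_
  simp_rw [← funext_iff (f := fun i => f i (x i))]
  simp [mul_comm]

/-- Local bound for the 4-party Bell inequality used in the eight-device
amplification protocol: every deterministic strategy has Bell value at least 2,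
and hence every local behavior `p(a⃗|x⃗)` satisfies
`Σ c_{a⃗,x⃗} p(a⃗|x⃗) ≥ 2`. Bits are encoded by `Bool`. -/
theorem stmt_17 (X₀ X₁ : Finset (Fin 4 → Bool))
    (hX₀ : X₀ = {![false, true, true, true], ![true, false, true, true],
        ![true, true, false, true], ![true, true, true, false]})
    (hX₁ : X₁ = {![false, false, false, true], ![false, false, true, false],
        ![false, true, false, false], ![true, false, false, false]}) :
    (∀ f : Fin 4 → (Bool → Bool),
      2 ≤ (X₀.filter (fun x => Bool.xor (f 0 (x 0)) (Bool.xor (f 1 (x 1))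
              (Bool.xor (f 2 (x 2)) (f 3 (x 3)))) = true)).card
        + (X₁.filter (fun x => Bool.xor (f 0 (x 0)) (Bool.xor (f 1 (x 1))
              (Bool.xor (f 2 (x 2)) (f 3 (x 3)))) = false)).card) ∧
    (∀ μ : (Fin 4 → (Bool → Bool)) → ℝ,
      (∀ f, 0 ≤ μ f) → (∑ f, μ f = 1) →
      (2 : ℝ) ≤ ∑ x ∈ X₀ ∪ X₁, ∑ a : Fin 4 → Bool,
        (if x ∈ X₀
          then (if Bool.xor (a 0) (Bool.xor (a 1) (Bool.xor (a 2) (a 3))) = true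
                then (1 : ℝ) else 0)
          else (if Bool.xor (a 0) (Bool.xor (a 1) (Bool.xor (a 2) (a 3))) = true
                then (0 : ℝ) else 1)) *
        (∑ f : Fin 4 → (Bool → Bool),
          if (∀ i : Fin 4, f i (x i) = a i) then μ f else 0)) := by
  have det : ∀ f : Fin 4 → (Bool → Bool),
      2 ≤ (X₀.filter (fun x => Bool.xor (f 0 (x 0)) (Bool.xor (f 1 (x 1))
              (Bool.xor (f 2 (x 2)) (f 3 (x 3)))) = true)).card
        + (X₁.filter (fun x => Bool.xor (f 0 (x 0)) (Bool.xor (f 1 (x 1))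
              (Bool.xor (f 2 (x 2)) (f 3 (x 3)))) = false)).card := by
    intro f
    have toNat_ite (b : Bool) : (if b = true then 1 else 0) = b.toNat := by cases b <;> rfl
    have toNat_ite_not (b : Bool) : (if b = false then 1 else 0) = (!b).toNat := by
      cases b <;> rfl
    rw [Finset.card_filter, Finset.card_filter, hX₀, hX₁]
    simp_rw [toNat_ite, toNat_ite_not]
    iterate 6 rw [Finset.sum_insert (by decide)]
    rw [Finset.sum_singleton, Finset.sum_singleton]
    exact two_le_bits (f 0 false) (f 0 true) (f 1 false) (f 1 true)
      (f 2 false) (f 2 true) (f 3 false) (f 3 true)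
  refine ⟨det, fun μ hμ hsum => ?_⟩
  have hdisj : Disjoint X₀ X₁ := by
    rw [hX₀, hX₁]
    decide
  rw [bell_eq_average (X₀ ∪ X₁) (fun x a => if x ∈ X₀
          then (if Bool.xor (a 0) (Bool.xor (a 1) (Bool.xor (a 2) (a 3))) = true
                then (1 : ℝ) else 0)
          else (if Bool.xor (a 0) (Bool.xor (a 1) (Bool.xor (a 2) (a 3))) = true
                then (0 : ℝ) else 1))]
  calc (2 : ℝ) = ∑ f, μ f * 2 := by rw [← Finset.sum_mul, hsum, one_mul]
    _ ≤ _ := Finset.sum_le_sum fun f _ => mul_le_mul_of_nonneg_left ?_ (hμ f)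
  -- On `X₀ ∪ X₁` the coefficients count the inputs of the two filtered sets in `det`.
  have h := Nat.cast_le (α := ℝ).mpr (det f)
  rw [Nat.cast_ofNat] at h
  refine h.trans_eq ?_
  rw [Finset.sum_union hdisj, Nat.cast_add, Finset.card_filter, Finset.card_filter,
    Nat.cast_sum, Nat.cast_sum]
  congr 1
  · refine Finset.sum_congr rfl fun x hx => ?_
    rw [if_pos hx]
    split_ifs <;> simp
  · refine Finset.sum_congr rfl fun x hx => ?_
    rw [if_neg (Finset.disjoint_right.mp hdisj hx)]
    split_ifs <;> simp_all
end

section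
/- (Majority bound for the 5-party Mermin inequality under no-signaling.) Let X₀ = {10000, 01000, 00100, 00010, 00001, 11111} and X₁ = {00111, 01011, 01101, 01110, 10011, 10101, 10110, 11001, 11010, 11100} ⊆ {0,1}⁵, and set c_{a⃗,x⃗} = (a₁⊕a₂⊕a₃⊕a₄⊕a₅) for x⃗ ∈ X₀ and (a₁⊕a₂⊕a₃⊕a₄⊕a₅⊕1) for x⃗ ∈ X₁. Let p(a⃗|x⃗) be any 5-party no-signaling behavior (binary inputs and outputs for each party) that maximally violates the inequality, i.e. Σ_{x⃗∈X₀∪X₁} Σ_{a⃗} c_{a⃗,x⃗}·p(a⃗|x⃗) = 0. Then for every input x⃗ ∈ X₀ ∪ X₁ and every bit m ∈ {0,1}, the probability that the majority of the first three output bits equals m satisfies Σ_{a⃗ : maj(a₁,a₂,a₃)=m} p(a⃗|x⃗) ≤ 3/4. -/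
/-!
Write `A_i = (-1)^{a_i}` and let `E_S(x)` be the expectation of `∏_{i ∈ S} A_i` on input `x`. By
no-signaling `E_S(x)` depends only on `x` restricted to `S` (`corr_congr`). The inputs in the
inequality are those of odd weight, and maximal violation says that on such an input
`∏ A_i = (-1)^⌊|x|/2⌋` with certainty.

*Symmetry.* Fix a target input `x` and a bit `m`, and set
`q(a|y) = p(a ⊕ (x ∧ y) ⊕ d | x ⊕ y)`, where `d` has first three bits `m` and parity matching the
sign of `x`. Then `q` is again no-signaling, on inputs `y` of even weight it satisfies
`∏ A_i = (-1)^{|y|/2}` with certainty, and the event `maj = m` on input `x` for `p` becomes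
`maj = 0` on input `0` for `q`. So it is enough to treat this single case (`majority_core`).

*The canonical case.* Number the parties from `0`. The probability of `maj = 0` on input `0` is
`1/2 + (E_0 + E_1 + E_2 - E_012)/4`, and `E_012(0) = E_34(0)`. Perfect parity gives
`E_S(y) = ± E_{Sᶜ}(y)` on even inputs, and together with no-signaling this expresses correlators on
other inputs through those on input `0`: see `corr_eq_neg`. Thus
* `a_0 = a_1 = a_2`, `a_3 = a_4` on input `11100` has nonnegative probability, which reads
  `E_0 + E_1 + E_2 - E_34 ≤ 1 - (E_01 + E_02 + E_12)`;
* for `{i,j,k} = {0,1,2}`, the event `A_k = -1`, `A_i = A_j = -A_3 A_4` on the input with ones at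
  `i, j, 3` has nonnegative probability, which reads
  `E_0 + E_1 + E_2 - E_34 ≤ 1 + E_ik + E_jk - E_ij`.
The four inequalities add up to `4 (E_0 + E_1 + E_2 - E_34) ≤ 4`.
-/

namespace Mermin5

/-- Strings of five bits, used both for inputs and for outputs. -/
abbrev Bits := Fin 5 → Bool

/-- The `±1`-valued product `∏_{i ∈ S} (-1)^{a_i}`. -/
def chi (S : Finset (Fin 5)) (a : Bits) : ℤ := ∏ i ∈ S, if a i then -1 else 1

/-- Bitwise exclusive or. -/
def bxor (a b : Bits) : Bits := fun i => xor (a i) (b i)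

/-- Bitwise conjunction. -/
def band (a b : Bits) : Bits := fun i => a i && b i

/-- Hamming weight. -/
def wt (x : Bits) : ℕ := ∑ i, (x i).toNat

/-- The sign `(-1)^⌊|x|/2⌋`: the value of `∏ (-1)^{a_i}` that wins on an odd-weight input. -/
def sgn (x : Bits) : ℤ := (-1) ^ (wt x / 2)

/-- The zero string. -/
def zero : Bits := fun _ => false

/-- The input with ones exactly at the parties in `S`. -/
def ind (S : Finset (Fin 5)) : Bits := fun i => decide (i ∈ S)

/-- Majority of the first three bits. -/
def maj (a : Bits) : Bool := ((a 0 && a 1) || (a 0 && a 2)) || (a 1 && a 2)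

/-- The correlator `E_S(x)` of a behavior. -/
noncomputable def corr (p : Bits → Bits → ℝ) (S : Finset (Fin 5)) (x : Bits) : ℝ :=
  ∑ a, (chi S a : ℝ) * p a x

/-! ### Signs and bit strings -/

lemma chi_bxor (S : Finset (Fin 5)) (a b : Bits) : chi S (bxor a b) = chi S a * chi S b := by
  unfold chi
  rw [← Finset.prod_mul_distrib]
  refine Finset.prod_congr rfl fun i _ => ?_
  cases ha : a i <;> cases hb : b i <;> simp [bxor, ha, hb]

lemma chi_mul_self (S : Finset (Fin 5)) (a : Bits) : chi S a * chi S a = 1 := by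
  unfold chi
  rw [← Finset.prod_mul_distrib]
  refine Finset.prod_eq_one fun i _ => ?_
  cases a i <;> simp

lemma chi_congr {S : Finset (Fin 5)} {a b : Bits} (h : ∀ i ∈ S, a i = b i) :
    chi S a = chi S b :=
  Finset.prod_congr rfl fun i hi => by rw [h i hi]

lemma chi_eq_univ_mul_compl (S : Finset (Fin 5)) (a : Bits) :
    chi S a = chi Finset.univ a * chi Sᶜ a := by
  have h : chi S a * chi Sᶜ a = chi Finset.univ a := Finset.prod_mul_prod_compl S _
  rw [← h, mul_assoc, chi_mul_self, mul_one]

lemma bxor_bxor (a v : Bits) : bxor (bxor a v) v = a := by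
  funext i
  simp [bxor]

lemma sum_bxor (v : Bits) (f : Bits → ℝ) : ∑ a, f (bxor a v) = ∑ a, f a :=
  Equiv.sum_comp (Function.Involutive.toPerm (fun a => bxor a v) fun a => bxor_bxor a v) f

/-- The signs of the winning condition under a translation of the inputs: this is
`i^{|x ⊕ y|} = i^{|x|} i^{|y|} (-1)^{|x ∧ y|}`. -/
lemma sgn_bxor : ∀ x y : Bits, wt x % 2 = 1 → wt y % 2 = 0 →
    sgn (bxor x y) = chi Finset.univ (band x y) * sgn x * sgn y ∧ wt (bxor x y) % 2 = 1 := by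
  decide +kernel

/-! ### No-signaling in terms of correlators -/

/-- Group the outputs by their restriction to `S`: a correlator is a combination of the
marginal probabilities of the parties in `S`. -/
lemma corr_congr {p : Bits → Bits → ℝ}
    (hns : ∀ (T : Finset (Fin 5)) (x x' : Bits), (∀ i ∈ T, x i = x' i) → ∀ aT : Bits,
      (∑ a ∈ Finset.univ.filter (fun a : Bits => ∀ i ∈ T, a i = aT i), p a x)
        = (∑ a ∈ Finset.univ.filter (fun a : Bits => ∀ i ∈ T, a i = aT i), p a x'))
    (S : Finset (Fin 5)) (x x' : Bits) (h : ∀ i ∈ S, x i = x' i) :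
    corr p S x = corr p S x' := by
  -- `r a` keeps the bits of `a` in `S` and clears the others
  let r : Bits → Bits := fun a i => if i ∈ S then a i else false
  have key : ∀ z, corr p S z
      = ∑ b, (chi S b : ℝ) * ∑ a ∈ Finset.univ.filter (fun a => r a = b), p a z := by
    intro z
    unfold corr
    rw [← Finset.sum_fiberwise Finset.univ r]
    refine Finset.sum_congr rfl fun b _ => ?_
    rw [Finset.mul_sum]
    refine Finset.sum_congr rfl fun a ha => ?_
    have hab : r a = b := (Finset.mem_filter.mp ha).2
    rw [chi_congr (S := S) (a := a) (b := b) fun i hi => by rw [← hab]; simp [r, hi]]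
  rw [key x, key x']
  refine Finset.sum_congr rfl fun b _ => ?_
  congr 1
  by_cases hb : r b = b
  · have hf : ∀ a, r a = b ↔ ∀ i ∈ S, a i = b i := by
      intro a
      constructor
      · intro hab i hi
        rw [← hab]
        simp [r, hi]
      · intro hab
        rw [← hb]
        funext i
        by_cases hi : i ∈ S
        · simp [r, hi, hab i hi]
        · simp [r, hi]
    simp only [hf]
    exact hns S x x' h b
  · have he : ∀ a, r a ≠ b := by
      rintro a rfl
      apply hb
      funext i
      by_cases hi : i ∈ S <;> simp [r, hi]
    simp [he]

/-! ### The canonical case -/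

section Core

variable {q : Bits → Bits → ℝ}

lemma corr_compl {y : Bits} (hpar : ∀ a, chi Finset.univ a ≠ sgn y → q a y = 0)
    (S : Finset (Fin 5)) : corr q S y = sgn y * corr q Sᶜ y := by
  unfold corr
  rw [Finset.mul_sum]
  refine Finset.sum_congr rfl fun a _ => ?_
  by_cases h : chi Finset.univ a = sgn y
  · rw [chi_eq_univ_mul_compl S a, h]
    push_cast
    ring
  · simp [hpar a h]

/-- If `y` agrees on `S` with an input `z` of weight two supported in `S`, then
`E_S(y) = E_S(z) = -E_{Sᶜ}(z) = -E_{Sᶜ}(0)`. -/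
lemma corr_eq_neg
    (hns : ∀ S y y', (∀ i ∈ S, y i = y' i) → corr q S y = corr q S y')
    (hpar : ∀ y, wt y % 2 = 0 → ∀ a, chi Finset.univ a ≠ sgn y → q a y = 0)
    (S T Z : Finset (Fin 5)) (y : Bits)
    (h : wt (ind Z) = 2 ∧ (∀ i ∈ S, y i = ind Z i) ∧ (∀ i ∈ T, ind Z i = zero i) ∧ T = Sᶜ) :
    corr q S y = - corr q T zero := by
  obtain ⟨hw, hS, hT, rfl⟩ := h
  rw [hns S y _ hS, corr_compl (hpar _ (by rw [hw])) S, hns Sᶜ _ _ hT]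
  simp [sgn, hw]

lemma corr_zero_compl
    (hpar : ∀ y, wt y % 2 = 0 → ∀ a, chi Finset.univ a ≠ sgn y → q a y = 0)
    (S T : Finset (Fin 5)) (h : T = Sᶜ) : corr q S zero = corr q T zero := by
  subst h
  rw [corr_compl (hpar _ (by decide)) S]
  simp [sgn, wt, zero]

/-- The correlator form of `P(a_0 = a_1 = a_2, a_3 = a_4 | 11100) ≥ 0`. -/
lemma ineq_all (h0 : ∀ a y, 0 ≤ q a y) (y : Bits) :
    0 ≤ corr q ∅ y + corr q {0, 1} y + corr q {0, 2} y + corr q {1, 2} y + corr q {3, 4} y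
      + corr q {0, 1, 3, 4} y + corr q {0, 2, 3, 4} y + corr q {1, 2, 3, 4} y := by
  have hpt : ∀ a, 0 ≤ chi ∅ a + chi {0, 1} a + chi {0, 2} a + chi {1, 2} a + chi {3, 4} a
      + chi {0, 1, 3, 4} a + chi {0, 2, 3, 4} a + chi {1, 2, 3, 4} a := by decide +kernel
  simp only [corr, ← Finset.sum_add_distrib, ← add_mul]
  refine Finset.sum_nonneg fun a _ => mul_nonneg ?_ (h0 a y)
  exact_mod_cast hpt a

/-- The correlator form of `P(A_k = -1, A_i = A_j = -A_3 A_4 | y) ≥ 0`. -/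
lemma ineq_pair (h0 : ∀ a y, 0 ≤ q a y) (y : Bits) (i j k : Fin 5)
    (hijk : ({i, j, k} : Finset (Fin 5)) = {0, 1, 2}) :
    0 ≤ corr q ∅ y - corr q {k} y + corr q {i, j} y - corr q {i, j, k} y
      - corr q {i, 3, 4} y - corr q {j, 3, 4} y
      + corr q {i, k, 3, 4} y + corr q {j, k, 3, 4} y := by
  have hpt : ∀ i j k : Fin 5, ({i, j, k} : Finset (Fin 5)) = {0, 1, 2} → ∀ a,
      0 ≤ chi ∅ a - chi {k} a + chi {i, j} a - chi {i, j, k} a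
      - chi {i, 3, 4} a - chi {j, 3, 4} a + chi {i, k, 3, 4} a + chi {j, k, 3, 4} a := by
    decide +kernel
  simp only [corr, ← Finset.sum_add_distrib, ← Finset.sum_sub_distrib, ← add_mul, ← sub_mul]
  refine Finset.sum_nonneg fun a _ => mul_nonneg ?_ (h0 a y)
  exact_mod_cast hpt i j k hijk a

/-- `ineq_pair` on the input with ones at `i, j, 3`, with all correlators moved to input `0`. -/
lemma ineq_pair_zero (h0 : ∀ a y, 0 ≤ q a y) (h1 : ∀ y, ∑ a, q a y = 1)
    (hns : ∀ S y y', (∀ i ∈ S, y i = y' i) → corr q S y = corr q S y')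
    (hpar : ∀ y, wt y % 2 = 0 → ∀ a, chi Finset.univ a ≠ sgn y → q a y = 0)
    (i j k : Fin 5) (hijk : ({i, j, k} : Finset (Fin 5)) = {0, 1, 2}) :
    corr q {i} zero + corr q {j} zero + corr q {k} zero - corr q {3, 4} zero
      ≤ 1 + corr q {i, k} zero + corr q {j, k} zero - corr q {i, j} zero := by
  have h := ineq_pair h0 (ind {i, j, 3}) i j k hijk
  have e0 : corr q ∅ (ind {i, j, 3}) = 1 := by simp [corr, chi, h1]
  have e1 : corr q {k} (ind {i, j, 3}) = corr q {k} zero :=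
    hns _ _ _ (by clear h e0; revert i j k; decide +kernel)
  have e2 : corr q {i, j} (ind {i, j, 3}) = - corr q {k, 3, 4} zero :=
    corr_eq_neg hns hpar _ _ {i, j} _ (by clear h e0 e1; revert i j k; decide +kernel)
  have e2' : corr q {k, 3, 4} zero = corr q {i, j} zero :=
    corr_zero_compl hpar _ _ (by clear h e0 e1 e2; revert i j k; decide +kernel)
  have e3 : corr q {i, j, k} (ind {i, j, 3}) = - corr q {3, 4} zero :=
    corr_eq_neg hns hpar _ _ {i, j} _ (by clear h e0 e1 e2 e2'; revert i j k; decide +kernel)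
  have e4 : corr q {i, 3, 4} (ind {i, j, 3}) = - corr q {j, k} zero :=
    corr_eq_neg hns hpar _ _ {i, 3} _ (by clear h e0 e1 e2 e2' e3; revert i j k; decide +kernel)
  have e5 : corr q {j, 3, 4} (ind {i, j, 3}) = - corr q {i, k} zero :=
    corr_eq_neg hns hpar _ _ {j, 3} _
      (by clear h e0 e1 e2 e2' e3 e4; revert i j k; decide +kernel)
  have e6 : corr q {i, k, 3, 4} (ind {i, j, 3}) = - corr q {j} zero :=
    corr_eq_neg hns hpar _ _ {i, 3} _
      (by clear h e0 e1 e2 e2' e3 e4 e5; revert i j k; decide +kernel)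
  have e7 : corr q {j, k, 3, 4} (ind {i, j, 3}) = - corr q {i} zero :=
    corr_eq_neg hns hpar _ _ {j, 3} _
      (by clear h e0 e1 e2 e2' e3 e4 e5 e6; revert i j k; decide +kernel)
  linarith

/-- `ineq_all` on input `11100`, with all correlators moved to input `0`. -/
lemma ineq_all_zero (h0 : ∀ a y, 0 ≤ q a y) (h1 : ∀ y, ∑ a, q a y = 1)
    (hns : ∀ S y y', (∀ i ∈ S, y i = y' i) → corr q S y = corr q S y')
    (hpar : ∀ y, wt y % 2 = 0 → ∀ a, chi Finset.univ a ≠ sgn y → q a y = 0) :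
    corr q {0} zero + corr q {1} zero + corr q {2} zero - corr q {3, 4} zero
      ≤ 1 - (corr q {0, 1} zero + corr q {0, 2} zero + corr q {1, 2} zero) := by
  have h := ineq_all h0 (ind {0, 1, 2})
  have e0 : corr q ∅ (ind {0, 1, 2}) = 1 := by simp [corr, chi, h1]
  have e1 : corr q {0, 1} (ind {0, 1, 2}) = - corr q {2, 3, 4} zero :=
    corr_eq_neg hns hpar _ _ {0, 1} _ (by decide +kernel)
  have e2 : corr q {0, 2} (ind {0, 1, 2}) = - corr q {1, 3, 4} zero :=
    corr_eq_neg hns hpar _ _ {0, 2} _ (by decide +kernel)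
  have e3 : corr q {1, 2} (ind {0, 1, 2}) = - corr q {0, 3, 4} zero :=
    corr_eq_neg hns hpar _ _ {1, 2} _ (by decide +kernel)
  have f1 : corr q {2, 3, 4} zero = corr q {0, 1} zero :=
    corr_zero_compl hpar _ _ (by decide +kernel)
  have f2 : corr q {1, 3, 4} zero = corr q {0, 2} zero :=
    corr_zero_compl hpar _ _ (by decide +kernel)
  have f3 : corr q {0, 3, 4} zero = corr q {1, 2} zero :=
    corr_zero_compl hpar _ _ (by decide +kernel)
  have e4 : corr q {3, 4} (ind {0, 1, 2}) = corr q {3, 4} zero :=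
    hns _ _ _ (by decide +kernel)
  have e5 : corr q {0, 1, 3, 4} (ind {0, 1, 2}) = - corr q {2} zero :=
    corr_eq_neg hns hpar _ _ {0, 1} _ (by decide +kernel)
  have e6 : corr q {0, 2, 3, 4} (ind {0, 1, 2}) = - corr q {1} zero :=
    corr_eq_neg hns hpar _ _ {0, 2} _ (by decide +kernel)
  have e7 : corr q {1, 2, 3, 4} (ind {0, 1, 2}) = - corr q {0} zero :=
    corr_eq_neg hns hpar _ _ {1, 2} _ (by decide +kernel)
  linarith

lemma majority_core (h0 : ∀ a y, 0 ≤ q a y) (h1 : ∀ y, ∑ a, q a y = 1)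
    (hns : ∀ S y y', (∀ i ∈ S, y i = y' i) → corr q S y = corr q S y')
    (hpar : ∀ y, wt y % 2 = 0 → ∀ a, chi Finset.univ a ≠ sgn y → q a y = 0) :
    (∑ a, if maj a = false then q a zero else 0) ≤ 3 / 4 := by
  have hpt : ∀ a, (if maj a = false then 4 else 0 : ℤ)
      = 2 * chi ∅ a + chi {0} a + chi {1} a + chi {2} a - chi {0, 1, 2} a := by decide +kernel
  have hmaj : 4 * (∑ a, if maj a = false then q a zero else 0)
      = 2 * corr q ∅ zero + corr q {0} zero + corr q {1} zero + corr q {2} zero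
        - corr q {0, 1, 2} zero := by
    simp only [corr, Finset.mul_sum, ← Finset.sum_add_distrib, ← Finset.sum_sub_distrib]
    refine Finset.sum_congr rfl fun a _ => ?_
    have h : ((if maj a = false then 4 else 0 : ℤ) : ℝ) = _ := congrArg _ (hpt a)
    push_cast at h
    calc 4 * (if maj a = false then q a zero else 0)
        = (if maj a = false then 4 else 0 : ℝ) * q a zero := by split_ifs <;> ring
      _ = _ := by rw [h]; ring
  have e0 : corr q ∅ zero = 1 := by simp [corr, chi, h1]
  have e1 : corr q {0, 1, 2} zero = corr q {3, 4} zero :=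
    corr_zero_compl hpar _ _ (by decide +kernel)
  have hI := ineq_all_zero h0 h1 hns hpar
  have h2 := ineq_pair_zero h0 h1 hns hpar 0 1 2 (by decide)
  have h3 := ineq_pair_zero h0 h1 hns hpar 0 2 1 (by decide)
  have h4 := ineq_pair_zero h0 h1 hns hpar 1 2 0 (by decide)
  rw [Finset.pair_comm 2 1] at h3
  rw [Finset.pair_comm 1 0, Finset.pair_comm 2 0] at h4
  linarith

end Core

/-! ### Reduction to the canonical case -/

/-- The constant output flip of the symmetry: `m` on the first three parties, and the last bit
adjusts the total parity to the sign of `x`. -/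
def shift (x : Bits) (m : Bool) : Bits := ![m, m, m, false, xor m (decide (sgn x = -1))]

lemma chi_shift : ∀ x m, chi Finset.univ (shift x m) = sgn x := by decide +kernel

lemma maj_bxor_shift (x : Bits) (m : Bool) (a : Bits) :
    maj (bxor a (shift x m)) = xor (maj a) m := by
  cases m <;> cases h0 : a 0 <;> cases h1 : a 1 <;> cases h2 : a 2 <;>
    simp [maj, bxor, shift, h0, h1, h2]

/-- The majority bound, with the inputs of the inequality described as those of odd weight and
maximal violation as `∏ (-1)^{a_i} = sgn x` with certainty. The proof passes to the behavior
`q(a|y) = p(a ⊕ (x ∧ y) ⊕ d | x ⊕ y)` with `d = shift x m`. -/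
lemma majority_of_parity {p : Bits → Bits → ℝ} (h0 : ∀ a x, 0 ≤ p a x)
    (h1 : ∀ x, ∑ a, p a x = 1)
    (hns : ∀ S x x', (∀ i ∈ S, x i = x' i) → corr p S x = corr p S x')
    (hpar : ∀ x, wt x % 2 = 1 → ∀ a, chi Finset.univ a ≠ sgn x → p a x = 0)
    (x : Bits) (hx : wt x % 2 = 1) (m : Bool) :
    (∑ a, if maj a = m then p a x else 0) ≤ 3 / 4 := by
  let v : Bits → Bits := fun y => bxor (band x y) (shift x m)
  let q : Bits → Bits → ℝ := fun a y => p (bxor a (v y)) (bxor x y)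
  have hq : ∀ S y, corr q S y = chi S (v y) * corr p S (bxor x y) := by
    intro S y
    unfold corr
    rw [← sum_bxor (v y), Finset.mul_sum]
    refine Finset.sum_congr rfl fun a _ => ?_
    simp only [q, bxor_bxor, chi_bxor]
    push_cast
    ring
  have hcore := majority_core (q := q) (fun a y => h0 _ _)
    (fun y => (sum_bxor (v y) fun a => p a (bxor x y)).trans (h1 _))
    (by
      intro S y y' h
      rw [hq, hq, hns S (bxor x y) (bxor x y') fun i hi => by simp [bxor, h i hi],
        chi_congr (S := S) (a := v y) (b := v y') fun i hi => by simp [v, bxor, band, h i hi]])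
    (by
      intro y hy a ha
      obtain ⟨hs, hw⟩ := sgn_bxor x y hx hy
      refine hpar _ hw _ fun h => ha ?_
      rw [hs] at h
      simp only [v, chi_bxor, chi_shift] at h
      -- cancel the two signs common to both sides of `h`
      have hx2 : sgn x * sgn x = 1 := by rw [← chi_shift x m, chi_mul_self]
      have hb2 := chi_mul_self Finset.univ (band x y)
      linear_combination (chi Finset.univ (band x y) * sgn x) * h
        + (sgn y - chi Finset.univ a) * (chi Finset.univ (band x y)) ^ 2 * hx2
        + (sgn y - chi Finset.univ a) * hb2)
  refine le_trans (le_of_eq ?_) hcore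
  rw [← sum_bxor (shift x m)]
  refine Finset.sum_congr rfl fun a _ => ?_
  have hv : v zero = shift x m := by funext i; simp [v, bxor, band, zero]
  have hz : bxor x zero = x := by funext i; simp [bxor, zero]
  simp only [q, hv, hz, maj_bxor_shift]
  cases maj a <;> cases m <;> simp

end Mermin5

open Mermin5


/-- Majority bound for the 5-party Mermin inequality under no-signaling: any
no-signaling behavior that maximally violates the inequality (Bell value 0) has
majority-of-first-three-outputs predictable with probability at most `3/4` on
every input appearing in the inequality. Bits are encoded by `Bool`. -/
theorem stmt_18
    (p : (Fin 5 → Bool) → (Fin 5 → Bool) → ℝ)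
    (hp0 : ∀ a x, 0 ≤ p a x) (hp1 : ∀ x, ∑ a, p a x = 1)
    (hns : ∀ (T : Finset (Fin 5)) (x x' : Fin 5 → Bool),
      (∀ i ∈ T, x i = x' i) → ∀ aT : Fin 5 → Bool,
        (∑ a ∈ Finset.univ.filter (fun a : Fin 5 → Bool => ∀ i ∈ T, a i = aT i), p a x)
          = (∑ a ∈ Finset.univ.filter (fun a : Fin 5 → Bool => ∀ i ∈ T, a i = aT i), p a x'))
    (X₀ X₁ : Finset (Fin 5 → Bool))
    (hX₀ : X₀ = {![true, false, false, false, false], ![false, true, false, false, false],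
        ![false, false, true, false, false], ![false, false, false, true, false],
        ![false, false, false, false, true], ![true, true, true, true, true]})
    (hX₁ : X₁ = {![false, false, true, true, true], ![false, true, false, true, true],
        ![false, true, true, false, true], ![false, true, true, true, false],
        ![true, false, false, true, true], ![true, false, true, false, true],
        ![true, false, true, true, false], ![true, true, false, false, true],
        ![true, true, false, true, false], ![true, true, true, false, false]})
    (c : (Fin 5 → Bool) → (Fin 5 → Bool) → ℝ)
    (hc : ∀ a x, c a x =
      if x ∈ X₀
        then (if Bool.xor (a 0) (Bool.xor (a 1) (Bool.xor (a 2) (Bool.xor (a 3) (a 4)))) = true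
              then 1 else 0)
        else (if Bool.xor (a 0) (Bool.xor (a 1) (Bool.xor (a 2) (Bool.xor (a 3) (a 4)))) = true
              then 0 else 1))
    (hviol : ∑ x ∈ X₀ ∪ X₁, ∑ a : Fin 5 → Bool, c a x * p a x = 0) :
    ∀ x ∈ X₀ ∪ X₁, ∀ m : Bool,
      (∑ a ∈ Finset.univ.filter
          (fun a : Fin 5 → Bool => (((a 0 && a 1) || (a 0 && a 2)) || (a 1 && a 2)) = m),
        p a x) ≤ 3/4 := by
  have hodd : ∀ x : Bits, x ∈ X₀ ∪ X₁ ↔ wt x % 2 = 1 := by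
    subst hX₀ hX₁
    decide +kernel
  have hsgn : ∀ x : Bits, wt x % 2 = 1 → (x ∈ X₀ ↔ sgn x = 1) := by
    subst hX₀
    decide +kernel
  have hchi : ∀ a : Bits,
      Bool.xor (a 0) (Bool.xor (a 1) (Bool.xor (a 2) (Bool.xor (a 3) (a 4)))) = true
        ↔ chi Finset.univ a = -1 := by
    decide +kernel
  have hchi' : ∀ a : Bits, chi Finset.univ a = 1 ∨ chi Finset.univ a = -1 := by
    decide +kernel
  have hsgn' : ∀ x : Bits, sgn x = 1 ∨ sgn x = -1 := by
    decide +kernel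
  have hc0 : ∀ a x, 0 ≤ c a x := by
    intro a x
    rw [hc]
    split_ifs <;> norm_num
  -- a vanishing sum of nonnegative terms: every losing event has probability zero
  have hpar : ∀ x, wt x % 2 = 1 → ∀ a, chi Finset.univ a ≠ sgn x → p a x = 0 := by
    intro x hx a ha
    have hin := (Finset.sum_eq_zero_iff_of_nonneg fun x _ =>
      Finset.sum_nonneg fun a _ => mul_nonneg (hc0 a x) (hp0 a x)).mp hviol x ((hodd x).mpr hx)
    have hax := (Finset.sum_eq_zero_iff_of_nonneg fun a _ =>
      mul_nonneg (hc0 a x) (hp0 a x)).mp hin a (Finset.mem_univ a)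
    have hc1 : c a x = 1 := by
      rw [hc]
      simp only [hchi, hsgn x hx]
      rcases hchi' a with h | h <;> rcases hsgn' x with h' | h' <;> rw [h, h'] at ha ⊢ <;>
        first | exact absurd rfl ha | norm_num
    simpa [hc1] using hax
  intro x hx m
  have h := majority_of_parity hp0 hp1 (corr_congr hns) hpar x ((hodd x).mp hx) m
  rw [Finset.sum_filter]
  exact h
end
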